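/- arXiv:2510.01610 — 2 statements merged into one kernel-verified Lean document; each statement's English description precedes it below -/
import Mathlib

section
/- Let A and O be n×n complex unitary matrices and let Λ be an n²×n² complex matrix. Then, with ⊗ denoting the Kronecker product and * the conjugate transpose, ‖(A⊗A)·Λ·(A⊗A)* − (O⊗O)·Λ·(O⊗O)*‖ ≤ 4·‖A − O‖·‖Λ‖. -/
/-!
The Kronecker product satisfies `‖X ⊗ Y‖ ≤ ‖X‖ ‖Y‖`: the maps `X ↦ X ⊗ 1` and `Y ↦ 1 ⊗ Y` are
`*`-homomorphisms between C⋆-algebras, hence contractive, and `X ⊗ Y = (X ⊗ 1)(1 ⊗ Y)`.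
Telescoping `A ⊗ A - O ⊗ O = (A - O) ⊗ A + O ⊗ (A - O)` and using that `A`, `O` have norm at most
`1` gives `‖A ⊗ A - O ⊗ O‖ ≤ 2 ‖A - O‖`. The theorem follows by telescoping the conjugations,
`P Λ P* - Q Λ Q* = (P - Q) Λ P* + Q Λ (P - Q)*` with `P = A ⊗ A` and `Q = O ⊗ O`, where `P`, `Q`
again have norm at most `1`.
-/

open Matrix
open scoped Kronecker

/-- The operator norm of a matrix induced by the Euclidean (ℓ²) vector norms,
i.e. the largest singular value. -/
noncomputable def l2OpNorm {𝕜 : Type*} [RCLike 𝕜] {m n : Type*} [Fintype m] [Fintype n]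
    [DecidableEq n] (M : Matrix m n 𝕜) : ℝ :=
  ‖LinearMap.toContinuousLinearMap (Matrix.toEuclideanLin M)‖

section

open scoped Matrix.Norms.L2Operator

variable {m n : Type*} [Fintype m] [DecidableEq m] [Fintype n] [DecidableEq n]

/-- The `*`-homomorphism `X ↦ X ⊗ 1`. -/
def kroneckerLeftHom : Matrix m m ℂ →⋆ₙₐ[ℂ] Matrix (m × n) (m × n) ℂ where
  toFun X := X ⊗ₖ 1
  map_smul' c X := smul_kronecker c X 1
  map_zero' := zero_kronecker 1
  map_add' X Y := add_kronecker X Y 1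
  map_mul' X Y := by rw [← mul_kronecker_mul, one_mul]
  map_star' X := by simp [star_eq_conjTranspose, conjTranspose_kronecker]

/-- The `*`-homomorphism `Y ↦ 1 ⊗ Y`. -/
def kroneckerRightHom : Matrix n n ℂ →⋆ₙₐ[ℂ] Matrix (m × n) (m × n) ℂ where
  toFun Y := 1 ⊗ₖ Y
  map_smul' c Y := kronecker_smul c 1 Y
  map_zero' := kronecker_zero 1
  map_add' X Y := kronecker_add 1 X Y
  map_mul' X Y := by rw [← mul_kronecker_mul, one_mul]
  map_star' Y := by simp [star_eq_conjTranspose, conjTranspose_kronecker]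

lemma norm_kronecker_le (X : Matrix m m ℂ) (Y : Matrix n n ℂ) : ‖X ⊗ₖ Y‖ ≤ ‖X‖ * ‖Y‖ := by
  have hX : ‖X ⊗ₖ (1 : Matrix n n ℂ)‖ ≤ ‖X‖ :=
    NonUnitalStarAlgHom.norm_apply_le (kroneckerLeftHom (n := n)) X
  have hY : ‖(1 : Matrix m m ℂ) ⊗ₖ Y‖ ≤ ‖Y‖ :=
    NonUnitalStarAlgHom.norm_apply_le (kroneckerRightHom (m := m)) Y
  calc ‖X ⊗ₖ Y‖ = ‖(X ⊗ₖ (1 : Matrix n n ℂ)) * ((1 : Matrix m m ℂ) ⊗ₖ Y)‖ := by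
        rw [← mul_kronecker_mul, mul_one, one_mul]
    _ ≤ ‖X ⊗ₖ (1 : Matrix n n ℂ)‖ * ‖(1 : Matrix m m ℂ) ⊗ₖ Y‖ := norm_mul_le _ _
    _ ≤ ‖X‖ * ‖Y‖ := by gcongr

/-- This is an inequality because the norm is `0` when the index type is empty. -/
lemma norm_le_one_of_mem_unitaryGroup {U : Matrix n n ℂ} (hU : U ∈ Matrix.unitaryGroup n ℂ) :
    ‖U‖ ≤ 1 := by
  rcases subsingleton_or_nontrivial (Matrix n n ℂ) with _ | _
  · rw [Subsingleton.elim U 0, norm_zero]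
    exact zero_le_one
  · exact (CStarRing.norm_of_mem_unitary hU).le

lemma norm_kronecker_self_sub_le {A O : Matrix n n ℂ} (hA : ‖A‖ ≤ 1) (hO : ‖O‖ ≤ 1) :
    ‖A ⊗ₖ A - O ⊗ₖ O‖ ≤ 2 * ‖A - O‖ := by
  have h : A ⊗ₖ A - O ⊗ₖ O = (A - O) ⊗ₖ A + O ⊗ₖ (A - O) := by
    ext ⟨i, k⟩ ⟨j, l⟩
    simp only [Matrix.sub_apply, Matrix.add_apply, kronecker_apply]
    ring
  calc ‖A ⊗ₖ A - O ⊗ₖ O‖ ≤ ‖A - O‖ * ‖A‖ + ‖O‖ * ‖A - O‖ := by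
        rw [h]
        exact norm_add_le_of_le (norm_kronecker_le _ _) (norm_kronecker_le _ _)
    _ ≤ ‖A - O‖ * 1 + 1 * ‖A - O‖ := by gcongr
    _ = 2 * ‖A - O‖ := by ring

lemma norm_conj_sub_conj_le {P Q : Matrix n n ℂ} (hP : ‖P‖ ≤ 1) (hQ : ‖Q‖ ≤ 1)
    (L : Matrix n n ℂ) : ‖P * L * Pᴴ - Q * L * Qᴴ‖ ≤ 2 * ‖P - Q‖ * ‖L‖ := by
  have h : P * L * Pᴴ - Q * L * Qᴴ = (P - Q) * L * Pᴴ + Q * L * (P - Q)ᴴ := by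
    rw [conjTranspose_sub]
    noncomm_ring
  calc ‖P * L * Pᴴ - Q * L * Qᴴ‖
      ≤ ‖P - Q‖ * ‖L‖ * ‖Pᴴ‖ + ‖Q‖ * ‖L‖ * ‖(P - Q)ᴴ‖ := by
        rw [h]
        exact norm_add_le_of_le (norm_mul₃_le ..) (norm_mul₃_le ..)
    _ = ‖P - Q‖ * ‖L‖ * ‖P‖ + ‖Q‖ * ‖L‖ * ‖P - Q‖ := by
        rw [l2_opNorm_conjTranspose, l2_opNorm_conjTranspose]
    _ ≤ ‖P - Q‖ * ‖L‖ * 1 + 1 * ‖L‖ * ‖P - Q‖ := by gcongr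
    _ = 2 * ‖P - Q‖ * ‖L‖ := by ring

lemma l2OpNorm_eq_norm (M : Matrix n n ℂ) : l2OpNorm M = ‖M‖ := rfl

end

/-- Let `A` and `O` be `n × n` complex unitary matrices and let `Λ` be an `n² × n²`
complex matrix.  Then `‖(A⊗A)·Λ·(A⊗A)* − (O⊗O)·Λ·(O⊗O)*‖ ≤ 4·‖A − O‖·‖Λ‖`. -/
theorem kronecker_conj_norm_diff_le_of_unitary
    (n : ℕ) (A O : Matrix (Fin n) (Fin n) ℂ)
    (hA : A ∈ Matrix.unitaryGroup (Fin n) ℂ) (hO : O ∈ Matrix.unitaryGroup (Fin n) ℂ)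
    (Λ : Matrix (Fin n × Fin n) (Fin n × Fin n) ℂ) :
    l2OpNorm ((A ⊗ₖ A) * Λ * (A ⊗ₖ A)ᴴ - (O ⊗ₖ O) * Λ * (O ⊗ₖ O)ᴴ) ≤
      4 * l2OpNorm (A - O) * l2OpNorm Λ := by
  have hA' := norm_le_one_of_mem_unitaryGroup hA
  have hO' := norm_le_one_of_mem_unitaryGroup hO
  have hP := norm_le_one_of_mem_unitaryGroup (kronecker_mem_unitary hA hA)
  have hQ := norm_le_one_of_mem_unitaryGroup (kronecker_mem_unitary hO hO)
  simp only [l2OpNorm_eq_norm]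
  refine (norm_conj_sub_conj_le hP hQ Λ).trans ?_
  open scoped Matrix.Norms.L2Operator in
  have h := mul_le_mul_of_nonneg_right (norm_kronecker_self_sub_le hA' hO') (norm_nonneg Λ)
  linarith
end

section
/- Let n ≥ 1, let f₁,…,fₙ be nonnegative integers with f_max = maxᵢ fᵢ, and let D = diag(1/2 + f₁, …, 1/2 + fₙ). Let S ∈ Sp(2n, ℝ) and set M = S·(D⊕D)·Sᵀ, where D⊕D is the 2n×2n block-diagonal matrix with two copies of D. Let ε ≥ 0 and let F be a 2n×2n real matrix with ‖F‖ ≤ 1. Suppose M + εF = R'·(D'⊕D')·R'ᵀ for some R' ∈ Sp(2n, ℝ) and some n×n diagonal matrix D' all of whose diagonal entries are at least 1/2. Then ‖R'⁻¹‖ = ‖R'‖ ≤ √( ‖S‖²·(1 + 2·f_max) + 2ε ). -/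
/-!
The inverse of a symplectic matrix is `R⁻¹ = -Ω Rᵀ Ω`, and `Ω` is orthogonal, so `R⁻¹`, `Rᵀ` and `R`
have the same operator norm (`l2_opNorm_inv_eq_of_symplectic`).

For the bound, `‖R'‖ = ‖R'ᵀ‖` is controlled through the quadratic form of `M + εF`. Since
`D' ⊕ D' ≥ 1/2` and `D ⊕ D ≤ 1/2 + f_max`, for every vector `x`
`‖R'ᵀx‖² ≤ 2⟨x, R'(D' ⊕ D')R'ᵀx⟩ = 2⟨Sᵀx, (D ⊕ D)Sᵀx⟩ + 2ε⟨x, Fx⟩`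
`≤ (1 + 2 f_max)‖S‖²‖x‖² + 2ε‖x‖²`.
-/

open Matrix

/-- The standard symplectic form `Ω = [[0, Iₙ], [−Iₙ, 0]]` on `ℝ^(2n)`. -/
def stdSymplecticForm (n : ℕ) : Matrix (Fin n ⊕ Fin n) (Fin n ⊕ Fin n) ℝ :=
  Matrix.fromBlocks 0 1 (-1) 0

open scoped Matrix.Norms.L2Operator in
theorem l2OpNorm_eq_norm_s10 {m : Type*} [Fintype m] [DecidableEq m] (A : Matrix m m ℝ) :
    l2OpNorm A = ‖A‖ := rfl

/-- Mathlib's `Matrix.J` is `[[0, -1], [1, 0]]`, the opposite sign convention to `Ω`. -/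
theorem stdSymplecticForm_eq_neg_J (n : ℕ) : stdSymplecticForm n = -J (Fin n) ℝ := by
  simp [stdSymplecticForm, J, fromBlocks_neg]

theorem J_mem_unitary (n : ℕ) :
    J (Fin n) ℝ ∈ unitary (Matrix (Fin n ⊕ Fin n) (Fin n ⊕ Fin n) ℝ) := by
  rw [Unitary.mem_iff]
  simp [star_eq_conjTranspose, J_transpose, J_squared]

open scoped Matrix.Norms.L2Operator in
theorem l2_opNorm_transpose {m : Type*} [Fintype m] [DecidableEq m] (A : Matrix m m ℝ) :
    ‖Aᵀ‖ = ‖A‖ := by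
  rw [← conjTranspose_eq_transpose_of_trivial, l2_opNorm_conjTranspose]

open scoped Matrix.Norms.L2Operator in
/-- `R⁻¹ = -J Rᵀ J` differs from `Rᵀ` by unitary factors, which do not change the norm. -/
theorem l2_opNorm_inv_eq_of_symplectic {n : ℕ} {R : Matrix (Fin n ⊕ Fin n) (Fin n ⊕ Fin n) ℝ}
    (hR : Rᵀ * stdSymplecticForm n * R = stdSymplecticForm n) : ‖R⁻¹‖ = ‖R‖ := by
  have hmem : R ∈ symplecticGroup (Fin n) ℝ := by
    rw [SymplecticGroup.mem_iff']
    simpa [stdSymplecticForm_eq_neg_J] using hR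
  rw [SymplecticGroup.inv_eq_symplectic_inv R hmem,
    CStarRing.norm_mul_mem_unitary _ (J_mem_unitary n), neg_mul, norm_neg,
    CStarRing.norm_mem_unitary_mul _ (J_mem_unitary n), l2_opNorm_transpose]

theorem dotProduct_self_eq_norm_sq {m : Type*} [Fintype m] (x : m → ℝ) :
    x ⬝ᵥ x = ‖WithLp.toLp 2 x‖ ^ 2 := by
  rw [EuclideanSpace.real_norm_sq_eq]
  exact Finset.sum_congr rfl fun i _ => (sq (x i)).symm

open scoped Matrix.Norms.L2Operator in
theorem dotProduct_mulVec_le {m : Type*} [Fintype m] [DecidableEq m] (A : Matrix m m ℝ)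
    (x : m → ℝ) : x ⬝ᵥ A *ᵥ x ≤ ‖A‖ * (x ⬝ᵥ x) := by
  have h1 : x ⬝ᵥ A *ᵥ x = inner ℝ (WithLp.toLp 2 x) (WithLp.toLp 2 (A *ᵥ x)) := by
    simp [PiLp.inner_apply, dotProduct, mul_comm]
  have h2 := real_inner_le_norm (WithLp.toLp 2 x) (WithLp.toLp 2 (A *ᵥ x))
  have h3 : ‖WithLp.toLp 2 (A *ᵥ x)‖ ≤ ‖A‖ * ‖WithLp.toLp 2 x‖ :=
    l2_opNorm_mulVec A (WithLp.toLp 2 x)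
  rw [h1, dotProduct_self_eq_norm_sq]
  nlinarith [norm_nonneg (WithLp.toLp 2 x)]

open scoped Matrix.Norms.L2Operator in
theorem mulVec_dotProduct_self_le {m : Type*} [Fintype m] [DecidableEq m] (A : Matrix m m ℝ)
    (x : m → ℝ) : (A *ᵥ x) ⬝ᵥ (A *ᵥ x) ≤ ‖A‖ ^ 2 * (x ⬝ᵥ x) := by
  rw [dotProduct_self_eq_norm_sq, dotProduct_self_eq_norm_sq, ← mul_pow]
  exact pow_le_pow_left₀ (norm_nonneg _) (l2_opNorm_mulVec A (WithLp.toLp 2 x)) 2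

open scoped Matrix.Norms.L2Operator in
theorem l2_opNorm_le_sqrt {m : Type*} [Fintype m] [DecidableEq m] (A : Matrix m m ℝ) (C : ℝ)
    (h : ∀ x : m → ℝ, (A *ᵥ x) ⬝ᵥ (A *ᵥ x) ≤ C * (x ⬝ᵥ x)) : ‖A‖ ≤ √C := by
  rw [l2_opNorm_def]
  refine ContinuousLinearMap.opNorm_le_bound _ (Real.sqrt_nonneg _) fun x => ?_
  have hx := h x.ofLp
  rw [dotProduct_self_eq_norm_sq, dotProduct_self_eq_norm_sq] at hx
  have := Real.sqrt_le_sqrt hx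
  rwa [Real.sqrt_mul' _ (sq_nonneg _), Real.sqrt_sq (norm_nonneg _),
    Real.sqrt_sq (norm_nonneg _)] at this

theorem dotProduct_conj_mulVec {m : Type*} [Fintype m] (A B : Matrix m m ℝ) (x : m → ℝ) :
    x ⬝ᵥ (A * B * Aᵀ) *ᵥ x = (Aᵀ *ᵥ x) ⬝ᵥ B *ᵥ (Aᵀ *ᵥ x) := by
  rw [← mulVec_mulVec, ← mulVec_mulVec, dotProduct_mulVec x A, mulVec_transpose]

theorem dotProduct_diagonal_mulVec {m : Type*} [Fintype m] [DecidableEq m] (d y : m → ℝ) :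
    y ⬝ᵥ diagonal d *ᵥ y = ∑ i, d i * (y i * y i) := by
  simp only [dotProduct, mulVec_diagonal]
  exact Finset.sum_congr rfl fun i _ => by ring

theorem le_dotProduct_diagonal_mulVec {m : Type*} [Fintype m] [DecidableEq m] {d : m → ℝ} {c : ℝ}
    (h : ∀ i, c ≤ d i) (y : m → ℝ) : c * (y ⬝ᵥ y) ≤ y ⬝ᵥ diagonal d *ᵥ y := by
  rw [dotProduct_diagonal_mulVec, dotProduct, Finset.mul_sum]
  exact Finset.sum_le_sum fun i _ => mul_le_mul_of_nonneg_right (h i) (mul_self_nonneg _)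

theorem dotProduct_diagonal_mulVec_le {m : Type*} [Fintype m] [DecidableEq m] {d : m → ℝ} {c : ℝ}
    (h : ∀ i, d i ≤ c) (y : m → ℝ) : y ⬝ᵥ diagonal d *ᵥ y ≤ c * (y ⬝ᵥ y) := by
  rw [dotProduct_diagonal_mulVec, dotProduct, Finset.mul_sum]
  exact Finset.sum_le_sum fun i _ => mul_le_mul_of_nonneg_right (h i) (mul_self_nonneg _)

/-- Let `n ≥ 1`, let `f₁,…,fₙ` be nonnegative integers with maximum `f_max`, let
`D = diag(1/2 + f₁, …, 1/2 + fₙ)`, let `S ∈ Sp(2n, ℝ)` and `M = S·(D⊕D)·Sᵀ`.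
Let `ε ≥ 0` and let `F` be a `2n × 2n` real matrix with `‖F‖ ≤ 1`.  If
`M + εF = R'·(D'⊕D')·R'ᵀ` for some `R' ∈ Sp(2n, ℝ)` and some diagonal `D'` with all
diagonal entries at least `1/2`, then `‖R'⁻¹‖ = ‖R'‖ ≤ √(‖S‖²·(1 + 2·f_max) + 2ε)`. -/
theorem norm_of_perturbed_williamson_diagonalizer
    (n : ℕ) (hn : 1 ≤ n) (f : Fin n → ℕ)
    (S : Matrix (Fin n ⊕ Fin n) (Fin n ⊕ Fin n) ℝ)
    (hS : Sᵀ * stdSymplecticForm n * S = stdSymplecticForm n)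
    (ε : ℝ) (hε : 0 ≤ ε)
    (F : Matrix (Fin n ⊕ Fin n) (Fin n ⊕ Fin n) ℝ) (hF : l2OpNorm F ≤ 1)
    (D' : Matrix (Fin n) (Fin n) ℝ) (hD' : D'.IsDiag) (hD'half : ∀ i, 1 / 2 ≤ D' i i)
    (R' : Matrix (Fin n ⊕ Fin n) (Fin n ⊕ Fin n) ℝ)
    (hR' : R'ᵀ * stdSymplecticForm n * R' = stdSymplecticForm n)
    (hM : S * Matrix.fromBlocks (Matrix.diagonal fun i => 1 / 2 + (f i : ℝ)) 0 0
            (Matrix.diagonal fun i => 1 / 2 + (f i : ℝ)) * Sᵀ + ε • F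
          = R' * Matrix.fromBlocks D' 0 0 D' * R'ᵀ) :
    l2OpNorm R'⁻¹ = l2OpNorm R' ∧
      l2OpNorm R' ≤
        Real.sqrt (l2OpNorm S ^ 2 * (1 + 2 * ((Finset.univ.sup f : ℕ) : ℝ)) + 2 * ε) := by
  simp only [l2OpNorm_eq_norm_s10] at hF ⊢
  refine ⟨l2_opNorm_inv_eq_of_symplectic hR', ?_⟩
  rw [← l2_opNorm_transpose R']
  refine l2_opNorm_le_sqrt _ _ fun x => ?_
  rw [← hD'.diagonal_diag, fromBlocks_diagonal, fromBlocks_diagonal] at hM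
  -- The two sides of `hM` as quadratic forms at `x`.
  have hquad := congrArg (fun A => x ⬝ᵥ A *ᵥ x) hM
  simp only [add_mulVec, dotProduct_add, smul_mulVec, dotProduct_smul, smul_eq_mul,
    dotProduct_conj_mulVec] at hquad
  have hlower := le_dotProduct_diagonal_mulVec (c := 1 / 2) (d := Sum.elim D'.diag D'.diag)
    (by rintro (i | i) <;> simpa using hD'half i) (R'ᵀ *ᵥ x)
  have hf (i : Fin n) : (f i : ℝ) ≤ ((Finset.univ.sup f : ℕ) : ℝ) :=
    Nat.cast_le.2 (Finset.le_sup (Finset.mem_univ i))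
  set fmax : ℝ := ((Finset.univ.sup f : ℕ) : ℝ)
  have hupper := dotProduct_diagonal_mulVec_le (c := 1 / 2 + fmax)
    (d := Sum.elim (fun i => 1 / 2 + (f i : ℝ)) fun i => 1 / 2 + (f i : ℝ))
    (by rintro (i | i) <;> simpa using hf i) (Sᵀ *ᵥ x)
  have hS2 := mulVec_dotProduct_self_le Sᵀ x
  rw [l2_opNorm_transpose] at hS2
  have hxx : 0 ≤ x ⬝ᵥ x := by
    rw [dotProduct_self_eq_norm_sq]
    positivity
  have hFx : x ⬝ᵥ F *ᵥ x ≤ x ⬝ᵥ x :=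
    (dotProduct_mulVec_le F x).trans (mul_le_of_le_one_left hxx hF)
  have hεF := mul_le_mul_of_nonneg_left hFx hε
  have hfmax : 0 ≤ fmax := Nat.cast_nonneg _
  have hSf := mul_le_mul_of_nonneg_left hS2 (by positivity : 0 ≤ 1 / 2 + fmax)
  linarith
end
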